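/- Let p be a prime, n ≥ 1, λ a weighting, and f ∈ 𝔽_p[x₁,…,xₙ] a nonzero polynomial with f = init_λ(f) (i.e. all exponent vectors of f have the same λ-weight). Suppose c ∈ 𝔽_p satisfies c·Tr(f^{p−1}) = 1, so that φ := (g ↦ c·Tr(f^{p−1}·g)) is a Frobenius splitting of 𝔽_p[x₁,…,xₙ]. Then every ideal I compatibly split by φ satisfies I = init_λ(I); equivalently, I is homogeneous for the grading in which the variable xᵢ has degree λᵢ. -/

import Mathlib

open MvPolynomial

/-- The near-splitting `Tr` on `𝔽_p[x₁,…,xₙ]`: on a monomial `∏ xᵢ^{eᵢ}` it gives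
`∏ xᵢ^{(eᵢ+1)/p - 1}` if `p ∣ eᵢ + 1` for all `i`, and `0` otherwise, extended
`𝔽_p`-linearly (note that `c^{1/p} = c` for `c ∈ 𝔽_p`). -/
noncomputable def Tr (p n : ℕ) (g : MvPolynomial (Fin n) (ZMod p)) :
    MvPolynomial (Fin n) (ZMod p) :=
  ∑ m ∈ g.support,
    if ∀ i, p ∣ (m i + 1) then
      monomial (Finsupp.equivFunOnFinite.symm fun i => (m i + 1) / p - 1) (g.coeff m)
    else 0

/-- A Frobenius splitting is an additive map `φ` with `φ (a^p * b) = a * φ b` and `φ 1 = 1`. -/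
def IsFrobeniusSplitting (p : ℕ) {R : Type*} [CommRing R] (φ : R → R) : Prop :=
  (∀ a b : R, φ (a + b) = φ a + φ b) ∧ (∀ a b : R, φ (a ^ p * b) = a * φ b) ∧ φ 1 = 1

/-- The `λ`-weight of an exponent vector `m` is `∑ᵢ λᵢ·mᵢ`. -/
def wtOf {n : ℕ} (lam : Fin n → ℕ) (m : Fin n →₀ ℕ) : ℕ := ∑ i, lam i * m i

/-- The leading form `init_λ(g)`: the sum of the terms of `g` of maximal `λ`-weight. -/
noncomputable def initForm {R : Type*} [CommRing R] {n : ℕ} (lam : Fin n → ℕ)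
    (g : MvPolynomial (Fin n) R) : MvPolynomial (Fin n) R :=
  ∑ m ∈ g.support.filter (fun m => ∀ m' ∈ g.support, wtOf lam m' ≤ wtOf lam m),
    MvPolynomial.monomial m (g.coeff m)

/-- The initial ideal `init_λ(I)`, spanned by the leading forms of the nonzero
elements of `I`. -/
noncomputable def initIdeal {R : Type*} [CommRing R] {n : ℕ} (lam : Fin n → ℕ)
    (I : Ideal (MvPolynomial (Fin n) R)) : Ideal (MvPolynomial (Fin n) R) :=
  Ideal.span {h | ∃ g ∈ I, g ≠ 0 ∧ initForm lam g = h}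

/-!
A Frobenius splitting `φ` satisfies `φ^[e] (b ^ p ^ e) = b`. Suppose it is graded, in the sense
that it divides degrees by `p` and kills the degrees not divisible by `p`. Let `a ∈ I` and let `b`
be its component of degree `w`. With `q = p ^ e`, the component of degree `k` of `a` contributes to
`a * b ^ (q - 1)` a term of degree `k + (q - 1) * w ≡ k - w` modulo `q`. If `q` exceeds `w` and all
degrees of `a`, then `φ^[e]` kills all these terms except `b ^ q`, so
`b = φ^[e] (a * b ^ (q - 1)) ∈ I`.

The splitting `g ↦ c * Tr (F * g)` with `F` homogeneous is graded: `Tr` sends degree `p * d + δ` to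
degree `d`, where `δ` is the degree of `(x₁⋯xₙ) ^ (p - 1)`, and `c * Tr F = 1` forces `deg F = δ`.
-/

namespace IsFrobeniusSplitting

variable {R : Type*} [CommRing R] {p q : ℕ} {φ ψ : R → R}

theorem map_zero (hφ : IsFrobeniusSplitting p φ) : φ 0 = 0 :=
  (AddMonoidHom.mk' φ hφ.1).map_zero

theorem map_sum (hφ : IsFrobeniusSplitting p φ) {ι : Type*} (s : Finset ι) (a : ι → R) :
    φ (∑ i ∈ s, a i) = ∑ i ∈ s, φ (a i) :=
  _root_.map_sum (AddMonoidHom.mk' φ hφ.1) a s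

theorem map_pow_self (hφ : IsFrobeniusSplitting p φ) (a : R) : φ (a ^ p) = a := by
  simpa only [mul_one, hφ.2.2] using hφ.2.1 a 1

protected theorem id : IsFrobeniusSplitting 1 (id : R → R) :=
  ⟨fun _ _ => rfl, fun a b => by simp only [pow_one, id_eq], rfl⟩

theorem comp (hψ : IsFrobeniusSplitting q ψ) (hφ : IsFrobeniusSplitting p φ) :
    IsFrobeniusSplitting (q * p) (ψ ∘ φ) := by
  refine ⟨fun a b => ?_, fun a b => ?_, ?_⟩
  · simp only [Function.comp_apply, hφ.1, hψ.1]
  · simp only [Function.comp_apply, pow_mul, hφ.2.1, hψ.2.1]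
  · simp only [Function.comp_apply, hφ.2.2, hψ.2.2]

theorem iterate (hφ : IsFrobeniusSplitting p φ) (e : ℕ) : IsFrobeniusSplitting (p ^ e) φ^[e] := by
  induction e with
  | zero => exact IsFrobeniusSplitting.id
  | succ e ih => exact ih.comp hφ

end IsFrobeniusSplitting

/-- The notion of gradedness appropriate to a `p⁻¹`-linear map `φ`: it sends elements of degree
`p * d` to elements of degree `d` and kills the homogeneous elements whose degree is not divisible
by `p`. -/
structure DividesDegrees {R σ : Type*} [Zero R] [SetLike σ R] (p : ℕ) (𝒜 : ℕ → σ) (φ : R → R) :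
    Prop where
  map_mem : ∀ {d a}, a ∈ 𝒜 (p * d) → φ a ∈ 𝒜 d
  map_eq_zero : ∀ {d a}, a ∈ 𝒜 d → ¬ p ∣ d → φ a = 0

namespace DividesDegrees

variable {R σ : Type*} [Zero R] [SetLike σ R] {p q : ℕ} {𝒜 : ℕ → σ} {φ ψ : R → R}

protected theorem id : DividesDegrees 1 𝒜 (id : R → R) where
  map_mem ha := by simpa only [one_mul, id_eq] using ha
  map_eq_zero _ hd := absurd (one_dvd _) hd

theorem comp (hψ : DividesDegrees q 𝒜 ψ) (hφ : DividesDegrees p 𝒜 φ) (hψ0 : ψ 0 = 0) :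
    DividesDegrees (q * p) 𝒜 (ψ ∘ φ) where
  map_mem ha := hψ.map_mem (hφ.map_mem (by simpa only [mul_left_comm, mul_assoc] using ha))
  map_eq_zero {d a} ha hd := by
    by_cases hpd : p ∣ d
    · obtain ⟨k, rfl⟩ := hpd
      have hqk : ¬ q ∣ k := fun h => hd (by simpa only [mul_comm] using mul_dvd_mul_left p h)
      exact hψ.map_eq_zero (hφ.map_mem ha) hqk
    · rw [Function.comp_apply, hφ.map_eq_zero ha hpd, hψ0]

theorem iterate (hφ : DividesDegrees p 𝒜 φ) (hφ0 : φ 0 = 0) (e : ℕ) :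
    DividesDegrees (p ^ e) 𝒜 φ^[e] := by
  induction e with
  | zero => exact DividesDegrees.id
  | succ e ih => exact ih.comp hφ (Function.iterate_fixed hφ0 e)

end DividesDegrees

open DirectSum in
theorem exists_forall_component_ne_zero_lt_pow {M σ : Type*} [AddCommMonoid M] [SetLike σ M]
    [AddSubmonoidClass σ M] (ℳ : ℕ → σ) [Decomposition ℳ] {p : ℕ} (hp : 1 < p) (a : M) (w : ℕ) :
    ∃ e, w < p ^ e ∧ ∀ k, (decompose ℳ a k : M) ≠ 0 → k < p ^ e := by
  classical
  set B := (decompose ℳ a).support.sup id + w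
  have hB : B < p ^ B := Nat.lt_pow_self hp
  refine ⟨B, by omega, fun k hk => ?_⟩
  have hkB : k ≤ (decompose ℳ a).support.sup id :=
    Finset.le_sup (f := id) (DFinsupp.mem_support_iff.2 fun h => hk (by rw [h]; rfl))
  omega

section GradedSplitting

variable {R σ : Type*} [CommRing R] [SetLike σ R] [AddSubmonoidClass σ R] {𝒜 : ℕ → σ}
  [GradedRing 𝒜] {p q : ℕ} {φ : R → R}

open DirectSum in
theorem IsFrobeniusSplitting.map_mul_component_pow (hφ : IsFrobeniusSplitting q φ)
    (hdeg : DividesDegrees q 𝒜 φ) (hq : 0 < q) (a : R) (w : ℕ)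
    (hw : ∀ k, (decompose 𝒜 a k : R) ≠ 0 → k ≡ w [MOD q] → k = w) :
    φ (a * (decompose 𝒜 a w : R) ^ (q - 1)) = (decompose 𝒜 a w : R) := by
  classical
  set b := (decompose 𝒜 a w : R)
  have hdiag : φ (b * b ^ (q - 1)) = b := by
    rw [mul_pow_sub_one hq.ne', hφ.map_pow_self]
  have hoff (k : ℕ) (hkw : k ≠ w) : φ (decompose 𝒜 a k * b ^ (q - 1)) = 0 := by
    by_cases hk : (decompose 𝒜 a k : R) = 0
    · rw [hk, zero_mul, hφ.map_zero]
    have hmem : (decompose 𝒜 a k : R) * b ^ (q - 1) ∈ 𝒜 (k + (q - 1) * w) :=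
      SetLike.mul_mem_graded (decompose 𝒜 a k).2 (SetLike.pow_mem_graded _ (decompose 𝒜 a w).2)
    refine hdeg.map_eq_zero hmem fun hdvd => hkw (hw k hk ?_)
    have hsum : k + (q - 1) * w + w = k + q * w := by
      rw [add_assoc, ← Nat.succ_mul, Nat.succ_eq_add_one, Nat.sub_add_cancel hq]
    calc k ≡ k + q * w [MOD q] := by simp [Nat.ModEq]
      _ = k + (q - 1) * w + w := hsum.symm
      _ ≡ 0 + w [MOD q] := (Nat.modEq_zero_iff_dvd.2 hdvd).add_right w
      _ = w := zero_add w
  calc φ (a * b ^ (q - 1))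
      = ∑ k ∈ (decompose 𝒜 a).support, φ (decompose 𝒜 a k * b ^ (q - 1)) := by
        rw [← hφ.map_sum, ← Finset.sum_mul, sum_support_decompose]
    _ = φ (b * b ^ (q - 1)) :=
        Finset.sum_eq_single w (fun k _ => hoff k) fun hws => by
          rw [DFinsupp.notMem_support_iff.1 hws, ZeroMemClass.coe_zero, zero_mul, hφ.map_zero]
    _ = b := hdiag

theorem IsFrobeniusSplitting.isHomogeneous_of_compatible (hφ : IsFrobeniusSplitting p φ)
    (hdeg : DividesDegrees p 𝒜 φ) (hp : 1 < p) {I : Ideal R} (hI : ∀ a ∈ I, φ a ∈ I) :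
    I.IsHomogeneous 𝒜 := by
  intro w a ha
  obtain ⟨e, hwe, hae⟩ := exists_forall_component_ne_zero_lt_pow 𝒜 hp a w
  have hcomp := (hφ.iterate e).map_mul_component_pow (hdeg.iterate hφ.map_zero e) (by omega) a w
    fun k hk hkw => hkw.eq_of_lt_of_lt (hae k hk) hwe
  exact hcomp ▸ Set.MapsTo.iterate (s := (I : Set R)) hI e (I.mul_mem_right _ ha)

end GradedSplitting

section InitialIdeal

variable {R : Type*} [CommRing R] {n : ℕ} (lam : Fin n → ℕ)

theorem weight_eq_wtOf (m : Fin n →₀ ℕ) : Finsupp.weight lam m = wtOf lam m := by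
  simp only [Finsupp.weight_eq_sum, wtOf, smul_eq_mul, mul_comm]

theorem initForm_eq_weightedHomogeneousComponent (g : MvPolynomial (Fin n) R) :
    initForm lam g = weightedHomogeneousComponent lam (weightedTotalDegree lam g) g := by
  rw [weightedHomogeneousComponent_apply, initForm]
  refine Finset.sum_congr (Finset.filter_congr fun m hm => ?_) fun _ _ => rfl
  simp only [← weight_eq_wtOf]
  rw [← (le_weightedTotalDegree lam hm).ge_iff_eq, weightedTotalDegree, Finset.sup_le_iff]

theorem isWeightedHomogeneous_initForm (g : MvPolynomial (Fin n) R) :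
    IsWeightedHomogeneous lam (initForm lam g) (weightedTotalDegree lam g) := by
  rw [initForm_eq_weightedHomogeneousComponent]
  exact weightedHomogeneousComponent_isWeightedHomogeneous _ _

theorem initForm_eq_self_of_isWeightedHomogeneous {g : MvPolynomial (Fin n) R} {d : ℕ}
    (hg : IsWeightedHomogeneous lam g d) : initForm lam g = g := by
  rcases eq_or_ne g 0 with rfl | hg0
  · rw [initForm_eq_weightedHomogeneousComponent, map_zero]
  have hd : weightedTotalDegree lam g = d := WithBot.coe_injective <|
    (weightedTotalDegree_coe lam g hg0).symm.trans (hg.weighted_total_degree hg0)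
  rw [initForm_eq_weightedHomogeneousComponent, hd, hg.weightedHomogeneousComponent_same]

theorem mem_initIdeal_of_isWeightedHomogeneous {I : Ideal (MvPolynomial (Fin n) R)}
    {g : MvPolynomial (Fin n) R} {d : ℕ} (hgI : g ∈ I) (hg : IsWeightedHomogeneous lam g d) :
    g ∈ initIdeal lam I := by
  rcases eq_or_ne g 0 with rfl | hg0
  · exact Ideal.zero_mem _
  · exact Ideal.subset_span ⟨g, hgI, hg0, initForm_eq_self_of_isWeightedHomogeneous lam hg⟩

attribute [local instance] weightedGradedAlgebra

theorem isHomogeneous_initIdeal (I : Ideal (MvPolynomial (Fin n) R)) :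
    (initIdeal lam I).IsHomogeneous (weightedHomogeneousSubmodule R lam) := by
  refine Ideal.homogeneous_span _ _ ?_
  rintro _ ⟨g, -, -, rfl⟩
  exact ⟨_, isWeightedHomogeneous_initForm lam g⟩

theorem initIdeal_eq_self_iff_isHomogeneous {I : Ideal (MvPolynomial (Fin n) R)} :
    initIdeal lam I = I ↔ I.IsHomogeneous (weightedHomogeneousSubmodule R lam) := by
  refine ⟨fun hI => hI ▸ isHomogeneous_initIdeal lam I,
    fun hI => le_antisymm (Ideal.span_le.2 ?_) fun a ha => ?_⟩
  · rintro _ ⟨g, hg, -, rfl⟩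
    rw [initForm_eq_weightedHomogeneousComponent]
    exact weightedHomogeneousComponent_mem_of_mem R lam hI hg _
  · refine (mem_iff_weightedHomogeneousComponent_mem R lam (isHomogeneous_initIdeal lam I) a).2
      fun w => mem_initIdeal_of_isWeightedHomogeneous lam ?_
        (weightedHomogeneousComponent_isWeightedHomogeneous w a)
    exact weightedHomogeneousComponent_mem_of_mem R lam hI ha w

end InitialIdeal

section Trace

variable {p n : ℕ}

/-- The exponent vector of `(x₁⋯xₙ) ^ (p - 1)`, the monomial which `Tr` sends to `1`. -/
noncomputable def traceExponent (p n : ℕ) : Fin n →₀ ℕ :=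
  Finsupp.equivFunOnFinite.symm fun _ => p - 1

theorem dvd_add_one_and_div_sub_one_eq_iff (hp : 0 < p) (k l : ℕ) :
    p ∣ k + 1 ∧ (k + 1) / p - 1 = l ↔ k = p * l + (p - 1) := by
  have hsucc : p * l + (p - 1) + 1 = p * (l + 1) := by rw [mul_add_one]; omega
  constructor
  · rintro ⟨hdvd, rfl⟩
    have hpos : 0 < (k + 1) / p := Nat.div_pos (Nat.le_of_dvd k.succ_pos hdvd) hp
    rw [Nat.sub_add_cancel hpos, Nat.mul_div_cancel' hdvd] at hsucc
    omega
  · rintro rfl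
    rw [hsucc, Nat.mul_div_cancel_left _ hp]
    exact ⟨dvd_mul_right p _, rfl⟩

theorem coeff_Tr [NeZero p] (g : MvPolynomial (Fin n) (ZMod p)) (m : Fin n →₀ ℕ) :
    coeff m (Tr p n g) = coeff (p • m + traceExponent p n) g := by
  have hexp (b : Fin n →₀ ℕ) :
      ((∀ i, p ∣ b i + 1) ∧ Finsupp.equivFunOnFinite.symm (fun i => (b i + 1) / p - 1) = m) ↔
        b = p • m + traceExponent p n := by
    simp only [Finsupp.ext_iff, ← forall_and, Finsupp.equivFunOnFinite_symm_apply_apply,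
      dvd_add_one_and_div_sub_one_eq_iff (NeZero.pos p), traceExponent, Finsupp.add_apply,
      Finsupp.smul_apply, smul_eq_mul]
  simp only [Tr, coeff_sum, apply_ite (coeff m), coeff_monomial, coeff_zero, ← ite_and, hexp,
    Finset.sum_ite_eq', mem_support_iff]
  exact ite_eq_left_iff.2 fun h => (not_not.1 h).symm

theorem Tr_add [NeZero p] (g h : MvPolynomial (Fin n) (ZMod p)) :
    Tr p n (g + h) = Tr p n g + Tr p n h := by
  ext m
  simp only [coeff_Tr, coeff_add]

theorem smul_le_smul_add_traceExponent_iff [NeZero p] (k m : Fin n →₀ ℕ) :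
    p • k ≤ p • m + traceExponent p n ↔ k ≤ m := by
  have hp : 0 < p := NeZero.pos p
  simp only [Finsupp.le_def, traceExponent, Finsupp.add_apply, Finsupp.smul_apply, smul_eq_mul,
    Finsupp.equivFunOnFinite_symm_apply_apply]
  refine forall_congr' fun i => ⟨fun h => ?_, fun h => ?_⟩
  · refine Nat.lt_succ_iff.1 (Nat.lt_of_mul_lt_mul_left (a := p) ?_)
    rw [Nat.mul_succ]
    omega
  · exact (Nat.mul_le_mul_left p h).trans (Nat.le_add_right _ _)

theorem Tr_pow_mul [Fact p.Prime] (a b : MvPolynomial (Fin n) (ZMod p)) :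
    Tr p n (a ^ p * b) = a * Tr p n b := by
  induction a using MvPolynomial.induction_on' with
  | add a a' h h' => rw [add_pow_char, add_mul, Tr_add, h, h', add_mul]
  | monomial k u =>
    ext m
    rw [coeff_Tr, monomial_pow, ZMod.pow_card, coeff_monomial_mul', coeff_monomial_mul']
    simp only [smul_le_smul_add_traceExponent_iff]
    refine ite_congr rfl (fun hkm => ?_) fun _ => rfl
    obtain ⟨l, rfl⟩ := exists_add_of_le hkm
    rw [coeff_Tr, smul_add, add_assoc, add_tsub_cancel_left, add_tsub_cancel_left]

variable {lam : Fin n → ℕ} {D : ℕ} {F : MvPolynomial (Fin n) (ZMod p)} {c : ZMod p}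

theorem weight_of_coeff_Tr_ne_zero [NeZero p] (hF : IsWeightedHomogeneous lam F D)
    {m : Fin n →₀ ℕ} (hm : coeff m (Tr p n F) ≠ 0) :
    p * Finsupp.weight lam m + Finsupp.weight lam (traceExponent p n) = D := by
  rw [coeff_Tr] at hm
  simpa only [map_add, map_nsmul, smul_eq_mul] using hF hm

variable [Fact p.Prime]

theorem isFrobeniusSplitting_C_mul_Tr_mul (hc : C c * Tr p n F = 1) :
    IsFrobeniusSplitting p fun g => C c * Tr p n (F * g) := by
  refine ⟨fun a b => ?_, fun a b => ?_, ?_⟩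
  · simp only [mul_add, Tr_add]
  · simp only [mul_left_comm F, Tr_pow_mul, mul_left_comm (C c)]
  · simpa only [mul_one] using hc

theorem weight_traceExponent_eq (hF : IsWeightedHomogeneous lam F D) (hc : C c * Tr p n F = 1) :
    Finsupp.weight lam (traceExponent p n) = D := by
  have h0 : coeff 0 (C c * Tr p n F) ≠ 0 := by
    rw [hc, coeff_zero_one]
    exact one_ne_zero
  rw [coeff_C_mul] at h0
  simpa only [map_zero, mul_zero, zero_add] using
    weight_of_coeff_Tr_ne_zero hF (right_ne_zero_of_mul h0)

theorem dividesDegrees_C_mul_Tr_mul (hF : IsWeightedHomogeneous lam F D)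
    (hc : C c * Tr p n F = 1) :
    DividesDegrees p (weightedHomogeneousSubmodule (ZMod p) lam)
      fun g => C c * Tr p n (F * g) := by
  have hweight {d g} (hg : IsWeightedHomogeneous lam g d) {m : Fin n →₀ ℕ}
      (hm : coeff m (C c * Tr p n (F * g)) ≠ 0) : p * Finsupp.weight lam m = d := by
    rw [coeff_C_mul] at hm
    have hFg := weight_of_coeff_Tr_ne_zero (hF.mul hg) (right_ne_zero_of_mul hm)
    rw [weight_traceExponent_eq hF hc, add_comm] at hFg
    exact Nat.add_left_cancel hFg
  refine ⟨fun {d g} hg m hm => ?_, fun {d g} hg hpd => ?_⟩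
  · exact Nat.eq_of_mul_eq_mul_left (NeZero.pos p) (hweight hg hm)
  · ext m
    by_contra hm
    exact hpd ⟨_, (hweight hg hm).symm⟩

end Trace

theorem stmt_16_general {p : ℕ} [Fact p.Prime] {n : ℕ} (lam : Fin n → ℕ)
    {F : MvPolynomial (Fin n) (ZMod p)} {D : ℕ} (hF : IsWeightedHomogeneous lam F D)
    {c : ZMod p} (hc : C c * Tr p n F = 1) {I : Ideal (MvPolynomial (Fin n) (ZMod p))}
    (hI : ∀ g ∈ I, C c * Tr p n (F * g) ∈ I) : I = initIdeal lam I := by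
  let _ := weightedGradedAlgebra (ZMod p) lam
  have hhom : I.IsHomogeneous (weightedHomogeneousSubmodule (ZMod p) lam) :=
    (isFrobeniusSplitting_C_mul_Tr_mul hc).isHomogeneous_of_compatible
      (dividesDegrees_C_mul_Tr_mul hF hc) (Fact.out : p.Prime).one_lt hI
  exact ((initIdeal_eq_self_iff_isHomogeneous lam).2 hhom).symm

/-- suppose `f ≠ 0` satisfies `f = init_λ(f)` and `c·Tr(f^{p−1}) = 1`, so
that `φ := (g ↦ c·Tr(f^{p−1}·g))` is a Frobenius splitting. Then every ideal compatibly
split by `φ` satisfies `I = init_λ(I)`. -/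
theorem stmt_16 {p : ℕ} (hp : p.Prime) {n : ℕ} (hn : 1 ≤ n) (lam : Fin n → ℕ)
    (f : MvPolynomial (Fin n) (ZMod p)) (hf : f ≠ 0) (hinit : f = initForm lam f)
    (c : ZMod p) (hc : C c * Tr p n (f ^ (p - 1)) = 1)
    (I : Ideal (MvPolynomial (Fin n) (ZMod p)))
    (hI : ∀ g ∈ I, C c * Tr p n (f ^ (p - 1) * g) ∈ I) :
    I = initIdeal lam I := by
  have : Fact p.Prime := ⟨hp⟩
  have hfd := isWeightedHomogeneous_initForm lam f
  rw [← hinit] at hfd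
  exact stmt_16_general lam (hfd.pow (p - 1)) hc hI
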